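/- Let m ≥ 2, let B = {z ∈ ℂ^m : ‖z‖ < 1} be the unit ball and S = {z ∈ ℂ^m : ‖z‖ = 1} the unit sphere. Let U ⊆ ℂ^m be a connected open set with U ∩ S ≠ ∅ and let F : U → ℂ^m be a nonconstant holomorphic map with F(U ∩ S) ⊆ S. Then there exists a biholomorphism G : B → B (an automorphism of the unit ball) such that G coincides with F on some nonempty open subset of U ∩ B. -/

import Mathlib

noncomputable section

open Set Metric

/-- `Biholo f s t`: `f` is a biholomorphism from `s` onto `t`, i.e. `f` is holomorphic
on `s`, maps `s` into `t`, and has a holomorphic inverse from `t` onto `s`. -/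
def Biholo {E F : Type*} [NormedAddCommGroup E] [NormedSpace ℂ E]
    [NormedAddCommGroup F] [NormedSpace ℂ F]
    (f : E → F) (s : Set E) (t : Set F) : Prop :=
  DifferentiableOn ℂ f s ∧ Set.MapsTo f s t ∧
    ∃ g : F → E, DifferentiableOn ℂ g t ∧ Set.MapsTo g t s ∧
      Set.LeftInvOn g f s ∧ Set.RightInvOn g f t

open Topology Filter

section SeveralVariables

variable {E G : Type*} [NormedAddCommGroup E] [NormedSpace ℂ E]
  [NormedAddCommGroup G] [NormedSpace ℂ G]

theorem differentiable_line (a b : E) : Differentiable ℂ (fun t : ℂ => a + t • b) := by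
  fun_prop

theorem hasDerivAt_line (a b : E) (t : ℂ) : HasDerivAt (fun t : ℂ => a + t • b) b t := by
  simpa using ((hasDerivAt_id t).smul_const b).const_add a

/-- A holomorphic function on a convex open set which vanishes near a point vanishes. -/
theorem eqOn_zero_of_convex [CompleteSpace G] {U : Set E} (hU : IsOpen U) (hc : Convex ℝ U)
    {f : E → G} (hf : DifferentiableOn ℂ f U) {x : E} (hx : x ∈ U) (h : f =ᶠ[𝓝 x] 0) :
    EqOn f 0 U := by
  intro y hy
  let l : ℂ → E := fun t => x + t • (y - x)
  have hl : Differentiable ℂ l := differentiable_line _ _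
  have hlU : IsOpen (l ⁻¹' U) := hU.preimage hl.continuous
  have hconv : Convex ℝ (l ⁻¹' U) := by
    intro s hs t ht a b ha hb hab
    have := hc hs ht ha hb hab
    have e : l (a • s + b • t) = a • l s + b • l t := by
      simp only [l, ← Complex.coe_smul, smul_add, add_smul, smul_smul, smul_eq_mul]
      have : x = ((a : ℂ) + b) • x := by
        rw [← Complex.ofReal_add, hab]; simp
      nth_rewrite 1 [this]
      module
    simpa only [mem_preimage, e] using this
  have h0 : (0 : ℂ) ∈ l ⁻¹' U := by simpa [l] using hx
  have h1 : (1 : ℂ) ∈ l ⁻¹' U := by simpa [l] using hy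
  have hfl : DifferentiableOn ℂ (f ∘ l) (l ⁻¹' U) :=
    hf.comp hl.differentiableOn (fun _ h => h)
  have hev : (f ∘ l) =ᶠ[𝓝 0] 0 := by
    have : Tendsto l (𝓝 0) (𝓝 x) := by
      have := hl.continuous.tendsto 0
      simpa [l] using this
    exact this.eventually h
  have := (hfl.analyticOnNhd hlU).eqOn_zero_of_preconnected_of_eventuallyEq_zero
    hconv.isPreconnected h0 hev h1
  simpa [l] using this

/-- A holomorphic function on a connected open set which is constant near a point is constant. -/
theorem eqOn_const_of_preconnected [CompleteSpace G] {U : Set E} (hU : IsOpen U)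
    (hc : IsPreconnected U) {f : E → G} (hf : DifferentiableOn ℂ f U) {x : E} (hx : x ∈ U) {c : G}
    (h : f =ᶠ[𝓝 x] fun _ => c) : EqOn f (fun _ => c) U := by
  let u : Set E := {y | f =ᶠ[𝓝 y] fun _ => c}
  have hu : IsOpen u := isOpen_setOfPred_eventually_nhds
  have hsub : U ⊆ u := by
    refine hc.subset_of_closure_inter_subset hu ⟨x, hx, h⟩ ?_
    rintro y ⟨hyc, hyU⟩
    obtain ⟨r, hr, hrU⟩ := Metric.isOpen_iff.1 hU y hyU
    obtain ⟨z, hzu, hz⟩ := Metric.mem_closure_iff.1 hyc r hr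
    have hzb : z ∈ ball y r := by rwa [mem_ball, dist_comm]
    have hz0 : (fun w => f w - c) =ᶠ[𝓝 z] 0 := by
      filter_upwards [hzu] with w hw
      simp [hw]
    have := eqOn_zero_of_convex isOpen_ball (convex_ball y r)
      ((hf.mono hrU).sub_const c) hzb hz0
    filter_upwards [ball_mem_nhds y hr] with w hw
    exact sub_eq_zero.1 (this hw)
  exact fun y hy => (hsub hy).self_of_nhds

theorem differentiableAt_fderiv_apply [FiniteDimensional ℂ E] [FiniteDimensional ℂ G] {U : Set E}
    (hU : IsOpen U) {f : E → G} (hf : DifferentiableOn ℂ f U) (v : E) {x : E} (hx : x ∈ U) :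
    DifferentiableAt ℂ (fun z => fderiv ℂ f z v) x := by
  let _ : MeasurableSpace E := borel E
  have : BorelSpace E := ⟨rfl⟩
  have : CompleteSpace G := FiniteDimensional.complete ℂ G
  have : ProperSpace (E →L[ℂ] G) := FiniteDimensional.proper ℂ _
  obtain ⟨r, hr, hrU⟩ : ∃ r > 0, ball x r ⊆ U := Metric.isOpen_iff.1 hU x hx
  obtain ⟨r', hr', hbd⟩ : ∃ r' > 0, ∀ y ∈ ball x r', dist (f y) (f x) < 1 := by
    obtain ⟨d, hd, h⟩ := Metric.continuousAt_iff.1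
      ((hf x hx).differentiableAt (hU.mem_nhds hx)).continuousAt 1 one_pos
    exact ⟨d, hd, fun y hy => h hy⟩
  obtain ⟨R, hR, hRr, hRr'⟩ : ∃ R > 0, 4 * R ≤ r ∧ 4 * R ≤ r' :=
    ⟨min r r' / 4, by positivity, by linarith [min_le_left r r'], by linarith [min_le_right r r']⟩
  obtain ⟨s, hs, hsv⟩ : ∃ s > 0, s * ‖v‖ < R :=
    ⟨R / (‖v‖ + 1), by positivity, by
      rw [div_mul_eq_mul_div, div_lt_iff₀ (by positivity)]; nlinarith [norm_nonneg v]⟩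
  have hmem : ∀ z ∈ ball x R, ∀ t : ℂ, ‖t‖ ≤ s → z + t • v ∈ ball x (2 * R) := by
    intro z hz t ht
    rw [mem_ball, dist_eq_norm] at hz ⊢
    calc ‖z + t • v - x‖ = ‖(z - x) + t • v‖ := by congr 1; abel
      _ ≤ ‖z - x‖ + ‖t‖ * ‖v‖ := (norm_add_le _ _).trans (by rw [norm_smul])
      _ < 2 * R := by nlinarith [norm_nonneg v, mul_le_mul_of_nonneg_right ht (norm_nonneg v)]
  have hUR : ∀ z ∈ ball x (2 * R), z ∈ U := fun z hz => hrU (ball_subset_ball (by linarith) hz)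
  have hdiff : ∀ z ∈ ball x (2 * R), HasFDerivAt f (fderiv ℂ f z) z := fun z hz =>
    ((hf z (hUR z hz)).differentiableAt (hU.mem_nhds (hUR z hz))).hasFDerivAt
  have hbound : ∀ z ∈ ball x (2 * R), ‖fderiv ℂ f z‖ ≤ 2 / R := by
    intro z hz
    have hsub : ball z R ⊆ ball x (4 * R) := ball_subset_ball' (by linarith [mem_ball.1 hz])
    refine Complex.norm_fderiv_le_div_of_mapsTo_ball
      (hf.mono (hsub.trans ((ball_subset_ball hRr).trans hrU))) ?_ hR
    intro y hy
    have h1 := hbd y (ball_subset_ball hRr' (hsub hy))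
    have h2 := hbd z (ball_subset_ball (by linarith) hz)
    rw [mem_closedBall]
    linarith [dist_triangle_right (f y) (f z) (f x)]
  have key : ∀ z ∈ ball x R, fderiv ℂ f z v =
      (2 * Real.pi * Complex.I : ℂ)⁻¹ • ∮ t in C(0, s), ((t - 0) ^ 2)⁻¹ • f (z + t • v) := by
    intro z hz
    let l : ℂ → E := fun t => z + t • v
    have hl : Differentiable ℂ l := differentiable_line _ _
    have hsub : closedBall (0 : ℂ) s ⊆ l ⁻¹' U := fun t ht =>
      hUR _ (hmem z hz t (by simpa using ht))
    have := Complex.two_pi_I_inv_smul_circleIntegral_sub_sq_inv_smul_of_differentiable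
      (hU.preimage hl.continuous) hsub (hf.comp hl.differentiableOn fun _ h => h)
      (mem_ball_self hs)
    have hz2 : z ∈ ball x (2 * R) := ball_subset_ball (by linarith) hz
    have h3 : HasDerivAt (f ∘ l) (fderiv ℂ f z v) 0 := by
      have hl0 : l 0 = z := by simp [l]
      have := (hdiff z hz2)
      rw [← hl0] at this
      simpa [hl0] using this.comp_hasDerivAt (0 : ℂ) (hasDerivAt_line z v 0)
    rw [← h3.deriv, ← this]
    rfl
  have hev : (fun z => fderiv ℂ f z v) =ᶠ[𝓝 x] fun z =>
      (2 * Real.pi * Complex.I : ℂ)⁻¹ • ∮ t in C(0, s), ((t - 0) ^ 2)⁻¹ • f (z + t • v) := by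
    filter_upwards [ball_mem_nhds x hR] with z hz using key z hz
  refine DifferentiableAt.congr_of_eventuallyEq ?_ hev
  refine DifferentiableAt.const_smul ?_ _
  have hnc : ∀ θ : ℝ, ‖circleMap 0 s θ‖ = s := fun θ => by simp [abs_of_pos hs]
  let K : ℝ → ℂ := fun θ => deriv (circleMap 0 s) θ * ((circleMap 0 s θ - 0) ^ 2)⁻¹
  have hKc : Continuous K := by
    simp only [K, deriv_circleMap]
    refine Continuous.mul (by fun_prop) (Continuous.inv₀ (by fun_prop) fun θ => ?_)
    simp [hs.ne']
  have hcont : ∀ z ∈ ball x R, Continuous fun θ : ℝ => K θ • f (z + circleMap 0 s θ • v) := by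
    intro z hz
    refine hKc.smul ?_
    refine continuous_iff_continuousAt.2 fun θ => ?_
    refine ContinuousAt.comp (g := f) (hdiff _ (hmem z hz _ (hnc θ).le)).continuousAt ?_
    fun_prop
  have hmain : HasFDerivAt (fun z => ∫ θ in (0 : ℝ)..2 * Real.pi, K θ • f (z + circleMap 0 s θ • v))
      (∫ θ in (0 : ℝ)..2 * Real.pi, K θ • fderiv ℂ f (x + circleMap 0 s θ • v)) x := by
    refine intervalIntegral.hasFDerivAt_integral_of_dominated_of_fderiv_le
      (F' := fun z θ => K θ • fderiv ℂ f (z + circleMap 0 s θ • v))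
      (bound := fun θ => ‖K θ‖ * (2 / R)) (ball_mem_nhds x hR) ?_ ?_ ?_ ?_ ?_ ?_
    · filter_upwards [ball_mem_nhds x hR] with z hz
      exact (hcont z hz).aestronglyMeasurable
    · exact (hcont x (mem_ball_self hR)).intervalIntegrable _ _
    · have hm : Measurable fun θ : ℝ => x + circleMap 0 s θ • v :=
        (by fun_prop : Continuous fun θ : ℝ => x + circleMap 0 s θ • v).measurable
      exact hKc.aestronglyMeasurable.smul
        ((measurable_fderiv ℂ f).comp hm).aestronglyMeasurable
    · refine Eventually.of_forall fun θ _ z hz => ?_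
      rw [norm_smul]
      exact mul_le_mul_of_nonneg_left (hbound _ (hmem z hz _ (hnc θ).le)) (norm_nonneg _)
    · exact (hKc.norm.mul continuous_const).intervalIntegrable _ _
    · refine Eventually.of_forall fun θ _ z hz => ?_
      refine HasFDerivAt.const_smul ?_ (K θ)
      have := (hdiff _ (hmem z hz _ (hnc θ).le))
      simpa [Function.comp_def] using this.comp z ((hasFDerivAt_id z).add_const (circleMap 0 s θ • v))
  have : (fun z => ∮ t in C(0, s), ((t - 0) ^ 2)⁻¹ • f (z + t • v)) =
      fun z => ∫ θ in (0 : ℝ)..2 * Real.pi, K θ • f (z + circleMap 0 s θ • v) := by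
    funext z
    simp only [circleIntegral, smul_smul, K]
  rw [this]
  exact hmain.differentiableAt

/-- The derivative of a holomorphic map is holomorphic. -/
theorem differentiableOn_fderiv [FiniteDimensional ℂ E] [FiniteDimensional ℂ G] {U : Set E}
    (hU : IsOpen U) {f : E → G} (hf : DifferentiableOn ℂ f U) :
    DifferentiableOn ℂ (fderiv ℂ f) U := by
  let b := Module.finBasis ℂ E
  have h : ∀ L : E →L[ℂ] G, L = ∑ i, (b.coord i).toContinuousLinearMap.smulRight (L (b i)) := by
    intro L
    ext v
    conv_lhs => rw [← b.sum_repr v]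
    simp [-Module.Basis.sum_repr]
  have : fderiv ℂ f = fun z =>
      ∑ i, (b.coord i).toContinuousLinearMap.smulRight (fderiv ℂ f z (b i)) :=
    funext fun z => h _
  rw [this]
  intro x hx
  refine DifferentiableAt.differentiableWithinAt ?_
  refine DifferentiableAt.fun_sum fun i _ => ?_
  exact ((ContinuousLinearMap.smulRightL ℂ E G
    (b.coord i).toContinuousLinearMap).differentiableAt).comp x
      (differentiableAt_fderiv_apply hU hf (b i) hx)

end SeveralVariables

section Polarization

open ComplexConjugate

variable {E : Type*} [NormedAddCommGroup E] [InnerProductSpace ℂ E]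

/-- The quadratic polynomial `⟪a + conj t • b, a + t • b⟫`. -/
def quadPoly (a b : E) (t : ℂ) : ℂ :=
  inner ℂ a a + t * (inner ℂ a b + inner ℂ b a) + t ^ 2 * inner ℂ b b

theorem inner_line_eq_quadPoly (a b : E) (t : ℂ) :
    inner ℂ (a + conj t • b) (a + t • b) = quadPoly a b t := by
  simp only [quadPoly, inner_add_left, inner_add_right, inner_smul_left, inner_smul_right,
    Complex.conj_conj]
  ring

/-- A holomorphic curve taking real parameters to the unit sphere. -/
def sphereCurve (a b : E) (t : ℂ) : E :=
  (quadPoly a b t) ^ (-(1 / 2) : ℂ) • (a + t • b)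

theorem norm_sphereCurve_ofReal {a b : E} {x : ℝ}
    (h : quadPoly a b (x : ℂ) ∈ Complex.slitPlane) : ‖sphereCurve a b (x : ℂ)‖ = 1 := by
  have h1 : quadPoly a b (x : ℂ) = ((‖a + (x : ℂ) • b‖ ^ 2 : ℝ) : ℂ) := by
    rw [← inner_line_eq_quadPoly, Complex.conj_ofReal, inner_self_eq_norm_sq_to_K]
    push_cast; rfl
  have hne : ‖a + (x : ℂ) • b‖ ≠ 0 := by
    intro h0
    rw [h1, h0] at h
    simp at h
  have hpos : 0 < ‖a + (x : ℂ) • b‖ := lt_of_le_of_ne (norm_nonneg _) (Ne.symm hne)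
  rw [sphereCurve, norm_smul, h1, Complex.norm_cpow_eq_rpow_re_of_pos (by positivity)]
  have : (-(1 / 2) : ℂ).re = -(1 / 2 : ℝ) := by simp
  rw [this, Real.rpow_neg (by positivity), ← Real.sqrt_eq_rpow, Real.sqrt_sq hpos.le,
    inv_mul_cancel₀ hne]

theorem differentiableAt_sphereCurve {a b : E} {t : ℂ}
    (h : quadPoly a b t ∈ Complex.slitPlane) : DifferentiableAt ℂ (sphereCurve a b) t := by
  have hq : DifferentiableAt ℂ (quadPoly a b) t := by
    unfold quadPoly; fun_prop
  exact (hq.cpow_const h).smul (differentiable_line a b t)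

theorem eventually_sphereCurve {p : E} (hp : ‖p‖ = 1) {r : ℝ} (hr : 0 < r) :
    ∀ᶠ ab : E × E in 𝓝 (p, 0), ∀ t ∈ closedBall (0 : ℂ) 2,
      quadPoly ab.1 ab.2 t ∈ Complex.slitPlane ∧ sphereCurve ab.1 ab.2 t ∈ ball p r := by
  refine (isCompact_closedBall (0 : ℂ) 2).eventually_forall_of_forall_eventually
    (P := fun (ab : E × E) t => quadPoly ab.1 ab.2 t ∈ Complex.slitPlane ∧
      sphereCurve ab.1 ab.2 t ∈ ball p r) fun t _ => ?_
  have hq1 : quadPoly p (0 : E) t = 1 := by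
    simp [quadPoly, inner_self_eq_norm_sq_to_K, hp]
  have hs1 : sphereCurve p (0 : E) t = p := by simp [sphereCurve, hq1]
  have hqc : Continuous fun x : (E × E) × ℂ => quadPoly x.1.1 x.1.2 x.2 := by
    unfold quadPoly; fun_prop
  have hslit : quadPoly p (0 : E) t ∈ Complex.slitPlane := by rw [hq1]; simp
  have hsc : ContinuousAt (fun x : (E × E) × ℂ => sphereCurve x.1.1 x.1.2 x.2) ((p, 0), t) := by
    unfold sphereCurve
    refine ContinuousAt.smul ?_ (by fun_prop)
    exact hqc.continuousAt.cpow continuousAt_const hslit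
  refine Eventually.and ?_ ?_
  · exact hqc.continuousAt.eventually (Complex.isOpen_slitPlane.mem_nhds hslit)
  · refine hsc.eventually (isOpen_ball.mem_nhds ?_)
    simp only [hs1]
    exact mem_ball_self hr

/-- **Polarization.** A sesquiholomorphic identity valid on the unit sphere near `p` extends to the
pairs `(z, w)` near `(p, p)` with `⟪z, w⟫ = 1`. -/
theorem exists_polarization {p : E} (hp : ‖p‖ = 1) {r : ℝ} (hr : 0 < r) :
    ∃ ε > 0, ε ≤ r ∧ ∀ (ι : Type) [Fintype ι] (f g : ι → E → ℂ) (c : ℂ),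
      (∀ i, DifferentiableOn ℂ (f i) (ball p r)) → (∀ i, DifferentiableOn ℂ (g i) (ball p r)) →
      (∀ z ∈ ball p r, ‖z‖ = 1 → ∑ i, f i z * conj (g i z) = c) →
      ∀ z ∈ ball p ε, ∀ w ∈ ball p ε, inner ℂ z w = 1 → ∑ i, f i z * conj (g i w) = c := by
  have hev := eventually_sphereCurve hp hr
  have htend : Tendsto (fun x : E × E => ((1 / 2 : ℂ) • (x.1 + x.2),
      (-Complex.I / 2) • (x.1 - x.2))) (𝓝 (p, p)) (𝓝 (p, 0)) := by
    have : Continuous (fun x : E × E => ((1 / 2 : ℂ) • (x.1 + x.2),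
      (-Complex.I / 2) • (x.1 - x.2))) := by fun_prop
    have h := this.tendsto (p, p)
    have e : (1 / 2 : ℂ) • (p + p) = p := by rw [← two_smul ℂ p, smul_smul]; norm_num
    simpa only [e, sub_self, smul_zero] using h
  obtain ⟨ε, hε, hball⟩ := Metric.eventually_nhds_iff_ball.1 (htend.eventually hev)
  refine ⟨min ε r, lt_min hε hr, min_le_right _ _, ?_⟩
  intro ι _ f g c hf hg hfg z hz w hw hzw
  have hzw' : (z, w) ∈ ball (p, p) ε := by
    rw [mem_ball, Prod.dist_eq]
    exact max_lt ((mem_ball.1 hz).trans_le (min_le_left _ _))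
      ((mem_ball.1 hw).trans_le (min_le_left _ _))
  have hab := hball _ hzw'
  set a : E := (1 / 2 : ℂ) • (z + w) with ha
  set b : E := (-Complex.I / 2) • (z - w) with hb
  simp only at hab
  have hI : ∀ x y : E, Complex.I • (-Complex.I / 2) • (x - y) = (1 / 2 : ℂ) • (x - y) := by
    intro x y
    rw [smul_smul]
    congr 1
    linear_combination (-1 / 2 : ℂ) * Complex.I_sq
  have hz1 : a + Complex.I • b = z := by
    rw [ha, hb, hI]; module
  have hw1 : a + (-Complex.I) • b = w := by
    rw [ha, hb, neg_smul, hI]; module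
  have hwz : inner ℂ w z = 1 := by rw [← inner_conj_symm, hzw, map_one]
  have hqI : quadPoly a b Complex.I = 1 := by
    rw [← inner_line_eq_quadPoly, Complex.conj_I, hz1, hw1, hwz]
  have hqI' : quadPoly a b (-Complex.I) = 1 := by
    rw [← inner_line_eq_quadPoly, map_neg, Complex.conj_I, neg_neg, hz1, hw1, hzw]
  have hsI : sphereCurve a b Complex.I = z := by simp [sphereCurve, hqI, hz1]
  have hsI' : sphereCurve a b (-Complex.I) = w := by
    rw [sphereCurve, hqI', hw1]; simp
  have hd : ∀ f : E → ℂ, DifferentiableOn ℂ f (ball p r) → ∀ t ∈ ball (0 : ℂ) 2,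
      DifferentiableAt ℂ (fun t => f (sphereCurve a b t)) t := by
    intro f hf t ht
    obtain ⟨h1, h2⟩ := hab t (ball_subset_closedBall ht)
    exact ((hf _ h2).differentiableAt (isOpen_ball.mem_nhds h2)).comp t
      (differentiableAt_sphereCurve h1)
  let φ : ℂ → ℂ := fun t =>
    ∑ i, f i (sphereCurve a b t) * conj (g i (sphereCurve a b (conj t))) - c
  have hφ : DifferentiableOn ℂ φ (ball 0 2) := by
    intro t ht
    refine DifferentiableAt.differentiableWithinAt ?_
    refine DifferentiableAt.sub_const ?_ c
    refine DifferentiableAt.fun_sum fun i _ => ?_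
    refine (hd _ (hf i) t ht).mul ?_
    have ht' : conj t ∈ ball (0 : ℂ) 2 := by simpa using ht
    have := (hd _ (hg i) _ ht').conj_conj
    simpa [Function.comp_def] using this
  have hreal : ∀ x : ℝ, (x : ℂ) ∈ ball (0 : ℂ) 2 → φ x = 0 := by
    intro x hx
    obtain ⟨h1, h2⟩ := hab x (ball_subset_closedBall hx)
    simp only [φ, Complex.conj_ofReal]
    rw [hfg _ h2 (norm_sphereCurve_ofReal h1), sub_self]
  have hfreq : ∃ᶠ t in 𝓝[≠] (0 : ℂ), φ t = 0 := by
    have ht : Tendsto (fun x : ℝ => (x : ℂ)) (𝓝[≠] 0) (𝓝[≠] 0) := by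
      refine tendsto_nhdsWithin_iff.2 ⟨?_, ?_⟩
      · exact (Complex.continuous_ofReal.tendsto' 0 0 (by simp)).mono_left nhdsWithin_le_nhds
      · filter_upwards [self_mem_nhdsWithin] with x hx
        simpa using hx
    refine ht.frequently (Eventually.frequently ?_)
    have h2 : ∀ᶠ x : ℝ in 𝓝[≠] 0, (x : ℂ) ∈ ball (0 : ℂ) 2 :=
      (ht.mono_right nhdsWithin_le_nhds).eventually (ball_mem_nhds _ two_pos)
    exact h2.mono hreal
  have hzero := (hφ.analyticOnNhd isOpen_ball).eqOn_zero_of_preconnected_of_frequently_eq_zero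
    (convex_ball (0 : ℂ) 2).isPreconnected (mem_ball_self two_pos) hfreq
  have := hzero (show Complex.I ∈ ball (0 : ℂ) 2 by simp)
  simp only [φ, Complex.conj_I, hsI, hsI'] at this
  exact sub_eq_zero.1 this

/-- Polarization for a pair of vector valued holomorphic maps. -/
theorem exists_polarization_inner [FiniteDimensional ℂ E] {p : E} (hp : ‖p‖ = 1) {r : ℝ}
    (hr : 0 < r) :
    ∃ ε > 0, ε ≤ r ∧ ∀ (f g : E → E) (c : ℂ),
      DifferentiableOn ℂ f (ball p r) → DifferentiableOn ℂ g (ball p r) →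
      (∀ z ∈ ball p r, ‖z‖ = 1 → inner ℂ (g z) (f z) = c) →
      ∀ z ∈ ball p ε, ∀ w ∈ ball p ε, inner ℂ z w = 1 → inner ℂ (g w) (f z) = c := by
  obtain ⟨ε, hε, hεr, h⟩ := exists_polarization hp hr
  refine ⟨ε, hε, hεr, fun f g c hf hg hfg z hz w hw hzw => ?_⟩
  let b := stdOrthonormalBasis ℂ E
  have key : ∀ x y : E, inner ℂ y x = ∑ i, inner ℂ (b i) x * conj (inner ℂ (b i) y) := by
    intro x y
    rw [← b.sum_inner_mul_inner]
    refine Finset.sum_congr rfl fun i _ => ?_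
    rw [inner_conj_symm, mul_comm]
  have hd : ∀ f : E → E, DifferentiableOn ℂ f (ball p r) → ∀ i,
      DifferentiableOn ℂ (fun z => inner ℂ (b i) (f z)) (ball p r) := fun f hf i =>
    (innerSL ℂ (b i)).differentiable.comp_differentiableOn hf
  rw [key]
  exact h _ (fun i z => inner ℂ (b i) (f z)) (fun i z => inner ℂ (b i) (g z)) c (hd f hf) (hd g hg)
    (fun z hz hz1 => by rw [← key]; exact hfg z hz hz1) z hz w hw hzw

end Polarization

section Nondegeneracy

open ComplexConjugate

variable {E : Type*} [NormedAddCommGroup E] [InnerProductSpace ℂ E]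

theorem tendsto_line (z v : E) : Tendsto (fun t : ℂ => z + t • v) (𝓝 0) (𝓝 z) :=
  (differentiable_line z v).continuous.tendsto' _ _ (by simp)

theorem hasDerivAt_comp_line {F : E → E} {z : E} (hF : DifferentiableAt ℂ F z) (v : E) :
    HasDerivAt (fun t : ℂ => F (z + t • v)) (fderiv ℂ F z v) 0 := by
  have h : HasFDerivAt F (fderiv ℂ F z) (z + (0 : ℂ) • v) := by simpa using hF.hasFDerivAt
  simpa [Function.comp_def] using h.comp_hasDerivAt (0 : ℂ) (hasDerivAt_line z v 0)

theorem inner_fderiv_eq_zero {F : E → E} {z v y : E} {c : ℂ} (hF : DifferentiableAt ℂ F z)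
    (h : ∀ᶠ t : ℂ in 𝓝 0, inner ℂ y (F (z + t • v)) = c) : inner ℂ y (fderiv ℂ F z v) = 0 := by
  have h1 : HasDerivAt (fun t : ℂ => inner ℂ y (F (z + t • v))) (inner ℂ y (fderiv ℂ F z v)) 0 :=
    (innerSL ℂ y).hasFDerivAt.comp_hasDerivAt (0 : ℂ) (hasDerivAt_comp_line hF v)
  exact h1.unique ((hasDerivAt_const (0 : ℂ) c).congr_of_eventuallyEq h)

/-- `F` preserves the relation `⟪z, w⟫ = 1` on `B`. -/
def PreservesQuadric (F : E → E) (B : Set E) : Prop :=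
  ∀ z ∈ B, ∀ w ∈ B, inner ℂ z w = 1 → inner ℂ (F w) (F z) = 1

theorem inner_eq_one_symm {z w : E} (h : inner ℂ z w = 1) : inner ℂ w z = 1 := by
  rw [← inner_conj_symm, h, map_one]

theorem inner_self_eq_one {z : E} (h : ‖z‖ = 1) : inner ℂ z z = (1 : ℂ) := by
  simp [inner_self_eq_norm_sq_to_K, h]

theorem inner_line_eq_one {w z v : E} (h : inner ℂ w z = 1) (hv : inner ℂ w v = 0) (t : ℂ) :
    inner ℂ w (z + t • v) = 1 := by
  rw [inner_add_right, inner_smul_right, h, hv, mul_zero, add_zero]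

theorem PreservesQuadric.inner_fderiv {F : E → E} {B : Set E} (hB : IsOpen B)
    (hF : DifferentiableOn ℂ F B) (hQ : PreservesQuadric F B) {z w : E} (hz : z ∈ B) (hw : w ∈ B)
    (hzw : inner ℂ z w = 1) (u : E) :
    inner ℂ (F w) (fderiv ℂ F z u) = inner ℂ w u * inner ℂ (F w) (fderiv ℂ F z z) := by
  have hwz := inner_eq_one_symm hzw
  have h0 : inner ℂ (F w) (fderiv ℂ F z (u - inner ℂ w u • z)) = 0 := by
    refine inner_fderiv_eq_zero (c := 1) ((hF z hz).differentiableAt (hB.mem_nhds hz)) ?_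
    filter_upwards [(tendsto_line z (u - inner ℂ w u • z)).eventually (hB.mem_nhds hz)] with t ht
    refine hQ _ ht _ hw (inner_eq_one_symm (inner_line_eq_one hwz ?_ t))
    rw [inner_sub_right, inner_smul_right, hwz, mul_one, sub_self]
  rw [map_sub, map_smul, inner_sub_right, inner_smul_right, sub_eq_zero] at h0
  exact h0

theorem PreservesQuadric.injective_fderiv {F : E → E} {B : Set E} (hB : IsOpen B)
    (hF : DifferentiableOn ℂ F B) (hQ : PreservesQuadric F B) {p : E} (hp : p ∈ B)
    (hp1 : ‖p‖ = 1) (hne : inner ℂ (F p) (fderiv ℂ F p p) ≠ 0) :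
    Function.Injective (fderiv ℂ F p) := by
  refine (injective_iff_map_eq_zero _).2 fun v hv => ?_
  by_contra hv0
  have hpp := inner_self_eq_one hp1
  have hpv : inner ℂ p v = 0 := by
    have := hQ.inner_fderiv hB hF hp hp hpp v
    rw [hv, inner_zero_right] at this
    exact (mul_eq_zero.1 this.symm).resolve_right hne
  have hFd := (hF p hp).differentiableAt (hB.mem_nhds hp)
  have hev : ∀ᶠ s : ℂ in 𝓝[≠] 0, inner ℂ (F (p + s • v)) (fderiv ℂ F p p) = 0 := by
    filter_upwards [((tendsto_line p v).eventually (hB.mem_nhds hp)).filter_mono nhdsWithin_le_nhds,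
      self_mem_nhdsWithin] with s hs hs0
    have h1 := hQ.inner_fderiv hB hF hp hs
      (inner_line_eq_one hpp hpv s) v
    rw [hv, inner_zero_right, inner_add_left, inner_smul_left, hpv, zero_add] at h1
    have hsv : conj s * inner ℂ v v ≠ 0 := mul_ne_zero (by simpa using hs0) (by simpa using hv0)
    exact (mul_eq_zero.1 h1.symm).resolve_left hsv
  have hlim : Tendsto (fun s : ℂ => inner ℂ (F (p + s • v)) (fderiv ℂ F p p)) (𝓝[≠] 0)
      (𝓝 (inner ℂ (F p) (fderiv ℂ F p p))) :=
    ((hFd.continuousAt.tendsto.comp (tendsto_line p v)).inner tendsto_const_nhds).mono_left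
      nhdsWithin_le_nhds
  exact hne (tendsto_nhds_unique hlim
    (tendsto_const_nhds.congr' (hev.mono fun s hs => hs.symm)))

theorem exists_ne_zero_inner_eq_zero (hdim : 2 ≤ Module.finrank ℂ E) (z : E) :
    ∃ v : E, v ≠ 0 ∧ inner ℂ z v = 0 := by
  have : FiniteDimensional ℂ E := Module.finite_of_finrank_pos (by omega)
  have hker : LinearMap.ker (innerSL ℂ z : E →L[ℂ] ℂ).toLinearMap ≠ ⊥ := by
    refine LinearMap.ker_ne_bot_of_finrank_lt ?_
    simp only [Module.finrank_self]
    omega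
  obtain ⟨v, hv, hv0⟩ := Submodule.exists_mem_ne_zero_of_ne_bot hker
  exact ⟨v, hv0, by simpa using hv⟩

variable [FiniteDimensional ℂ E]

/-- If the normal derivative vanishes along the sphere, the map is locally constant. -/
theorem eventually_const_of_inner_fderiv_eq_zero (hdim : 2 ≤ Module.finrank ℂ E) {F : E → E}
    {p : E} (hp : ‖p‖ = 1) {r : ℝ} (hr : 0 < r) (hF : DifferentiableOn ℂ F (ball p r))
    (hS : ∀ z ∈ ball p r, ‖z‖ = 1 → ‖F z‖ = 1)
    (h0 : ∀ z ∈ ball p r, ‖z‖ = 1 → inner ℂ (F z) (fderiv ℂ F z z) = 0) :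
    ∃ c, F =ᶠ[𝓝 p] fun _ => c := by
  obtain ⟨ε, hε, hεr, hpol⟩ := exists_polarization_inner hp hr
  have hdF := differentiableOn_fderiv isOpen_ball hF
  have hsub : ball p ε ⊆ ball p r := ball_subset_ball hεr
  have hFε := hF.mono hsub
  have hQ : PreservesQuadric F (ball p ε) := hpol F F 1 hF hF fun z hz hz1 =>
    inner_self_eq_one (hS z hz hz1)
  have hQ0 := hpol (fun z => fderiv ℂ F z z) F 0 (hdF.clm_apply differentiableOn_id) hF h0
  have hat : ∀ z ∈ ball p ε, DifferentiableAt ℂ F z := fun z hz =>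
    (hFε z hz).differentiableAt (isOpen_ball.mem_nhds hz)
  have htan : ∀ z ∈ ball p ε, ‖z‖ = 1 → ∀ v, inner ℂ z v = 0 → fderiv ℂ F z v = 0 := by
    intro z hz hz1 v hv
    have hzz := inner_self_eq_one hz1
    refine (inner_self_eq_zero (𝕜 := ℂ)).1 (inner_fderiv_eq_zero (c := 0) (hat z hz) ?_)
    filter_upwards [(tendsto_line z v).eventually (isOpen_ball.mem_nhds hz)] with t ht
    have hzt : inner ℂ z (z + t • v) = 1 := inner_line_eq_one hzz hv t
    rw [← inner_conj_symm, hQ.inner_fderiv isOpen_ball hFε hz ht hzt v, hQ0 z hz _ ht hzt]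
    simp
  obtain ⟨δ, hδ, hδε, hpol2⟩ := exists_polarization hp hε
  have hrank : ∀ z ∈ ball p δ, ∀ w ∈ ball p δ, inner ℂ z w = 1 → ∀ a,
      fderiv ℂ F z a = inner ℂ w a • fderiv ℂ F z z := by
    intro z hz w hw hzw a
    refine ext_inner_left ℂ fun e => ?_
    have hd : ∀ x : E, DifferentiableOn ℂ (fun y => inner ℂ e (fderiv ℂ F y x)) (ball p ε) :=
      fun x => (innerSL ℂ e).differentiable.comp_differentiableOn
        ((hdF.mono hsub).clm_apply (differentiableOn_const x))
    have hl : ∀ x : E, DifferentiableOn ℂ (fun y => inner ℂ x y) (ball p ε) :=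
      fun x => (innerSL ℂ x).differentiable.differentiableOn
    have := hpol2 (Fin 2)
      ![fun y => inner ℂ e (fderiv ℂ F y a), fun y => inner ℂ e (fderiv ℂ F y z)]
      ![fun y => inner ℂ z y, fun y => - inner ℂ a y] 0
      (by intro i; fin_cases i; exacts [hd a, hd z])
      (by intro i; fin_cases i; exacts [hl z, (hl a).neg])
      (by
        intro y hy hy1
        have h1 := htan y hy hy1 (inner ℂ y z • a - inner ℂ y a • z) (by
          simp only [inner_sub_right, inner_smul_right]; ring)
        have h2 : inner ℂ e (fderiv ℂ F y (inner ℂ y z • a - inner ℂ y a • z)) = 0 := by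
          rw [h1, inner_zero_right]
        simp only [map_sub, map_smul, inner_sub_right, inner_smul_right] at h2
        simp only [Fin.sum_univ_two, Matrix.cons_val_zero, Matrix.cons_val_one, map_neg,
          inner_conj_symm]
        linear_combination h2) z hz w hw hzw
    simp only [Fin.sum_univ_two, Matrix.cons_val_zero, Matrix.cons_val_one, map_neg,
      inner_conj_symm, inner_eq_one_symm hzw] at this
    rw [inner_smul_right]
    linear_combination this
  have hp0 : p ≠ 0 := by rintro rfl; simp at hp
  have hzero : ∀ᶠ z in 𝓝 p, fderiv ℂ F z = 0 := by
    have hcont : ContinuousAt (fun z : E => ((‖z‖ ^ 2)⁻¹ : ℂ) • z) p := by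
      refine ContinuousAt.smul (ContinuousAt.inv₀ (by fun_prop) ?_) continuousAt_id
      simp [hp0]
    have hmem : ∀ᶠ z in 𝓝 p, ((‖z‖ ^ 2)⁻¹ : ℂ) • z ∈ ball p δ := by
      refine hcont.eventually (isOpen_ball.mem_nhds ?_)
      simpa [hp] using hδ
    filter_upwards [hmem, ball_mem_nhds p hδ, isOpen_ne.mem_nhds hp0] with z hw hz hz0
    set w := ((‖z‖ ^ 2)⁻¹ : ℂ) • z with hwdef
    have hzn : (‖z‖ ^ 2 : ℂ) ≠ 0 := by simpa using hz0
    have hzw : inner ℂ z w = 1 := by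
      rw [hwdef, inner_smul_right, inner_self_eq_norm_sq_to_K]
      exact inv_mul_cancel₀ hzn
    obtain ⟨s, hs0, hzs⟩ := exists_ne_zero_inner_eq_zero hdim z
    have hws : inner ℂ w s = 0 := by rw [hwdef, inner_smul_left, hzs, mul_zero]
    obtain ⟨t, ht, ht0⟩ := (((tendsto_line w s).eventually (isOpen_ball.mem_nhds hw)).filter_mono
      nhdsWithin_le_nhds |>.and (self_mem_nhdsWithin (a := (0 : ℂ)) (s := {0}ᶜ))).exists
    have h1 := hrank z hz w hw hzw s
    have h2 := hrank z hz _ ht (inner_line_eq_one hzw hzs t) s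
    rw [hws, zero_smul] at h1
    rw [h1, inner_add_left, hws, inner_smul_left, zero_add] at h2
    have h3 : fderiv ℂ F z z = 0 := by
      refine (smul_eq_zero.1 h2.symm).resolve_left (mul_ne_zero ?_ ?_)
      · simpa using ht0
      · simpa using hs0
    ext a
    rw [hrank z hz w hw hzw a, h3, smul_zero]
    rfl
  obtain ⟨ρ, hρ, hball⟩ := Metric.eventually_nhds_iff_ball.1 (hzero.and (ball_mem_nhds p hε))
  refine ⟨F p, ?_⟩
  filter_upwards [ball_mem_nhds p hρ] with z hz
  refine isOpen_ball.is_const_of_fderiv_eq_zero (convex_ball p ρ).isPreconnected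
    (fun y hy => (hat y (hball y hy).2).differentiableWithinAt) (fun y hy => (hball y hy).1) hz
    (mem_ball_self hρ)

end Nondegeneracy

section ProjectiveMap

variable {E : Type*} [NormedAddCommGroup E] [InnerProductSpace ℂ E]

/-- The map induced on the affine chart `t = 1` by a linear map of `ℂ × E`. -/
def projectiveMap (T : (ℂ × E) ≃ₗ[ℂ] (ℂ × E)) (z : E) : E := (T (1, z)).1⁻¹ • (T (1, z)).2

variable {T : (ℂ × E) ≃ₗ[ℂ] (ℂ × E)} {α : ℝ}

theorem norm_lt_norm_of_form (hα : 0 < α)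
    (hT : ∀ x, ‖(T x).1‖ ^ 2 - ‖(T x).2‖ ^ 2 = α * (‖x.1‖ ^ 2 - ‖x.2‖ ^ 2)) {z : E}
    (hz : z ∈ ball (0 : E) 1) : ‖(T (1, z)).2‖ < ‖(T (1, z)).1‖ := by
  rw [mem_ball_zero_iff] at hz
  have h := hT (1, z)
  have hz2 : 0 < 1 - ‖z‖ ^ 2 := by nlinarith [norm_nonneg z]
  have : 0 < α * (1 - ‖z‖ ^ 2) := mul_pos hα hz2
  simp only [norm_one, one_pow] at h
  exact lt_of_pow_lt_pow_left₀ 2 (norm_nonneg _) (by linarith)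

theorem projectiveMap_denom_ne_zero (hα : 0 < α)
    (hT : ∀ x, ‖(T x).1‖ ^ 2 - ‖(T x).2‖ ^ 2 = α * (‖x.1‖ ^ 2 - ‖x.2‖ ^ 2)) {z : E}
    (hz : z ∈ ball (0 : E) 1) : (T (1, z)).1 ≠ 0 :=
  norm_pos_iff.1 ((norm_nonneg _).trans_lt (norm_lt_norm_of_form hα hT hz))

theorem mapsTo_projectiveMap (hα : 0 < α)
    (hT : ∀ x, ‖(T x).1‖ ^ 2 - ‖(T x).2‖ ^ 2 = α * (‖x.1‖ ^ 2 - ‖x.2‖ ^ 2)) :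
    MapsTo (projectiveMap T) (ball 0 1) (ball 0 1) := by
  intro z hz
  have h := norm_lt_norm_of_form hα hT hz
  rw [mem_ball_zero_iff, projectiveMap, norm_smul, norm_inv, inv_mul_eq_div,
    div_lt_one ((norm_nonneg _).trans_lt h)]
  exact h

theorem differentiableOn_projectiveMap [FiniteDimensional ℂ E] (hα : 0 < α)
    (hT : ∀ x, ‖(T x).1‖ ^ 2 - ‖(T x).2‖ ^ 2 = α * (‖x.1‖ ^ 2 - ‖x.2‖ ^ 2)) :
    DifferentiableOn ℂ (projectiveMap T) (ball 0 1) := by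
  have hd : Differentiable ℂ fun z : E => T (1, z) :=
    (LinearMap.toContinuousLinearMap (T : (ℂ × E) →ₗ[ℂ] (ℂ × E))).differentiable.comp
      ((differentiable_const (1 : ℂ)).prodMk differentiable_id)
  exact (hd.fst.differentiableOn.inv fun z hz => projectiveMap_denom_ne_zero hα hT hz).smul
    hd.snd.differentiableOn

theorem leftInvOn_projectiveMap (hα : 0 < α)
    (hT : ∀ x, ‖(T x).1‖ ^ 2 - ‖(T x).2‖ ^ 2 = α * (‖x.1‖ ^ 2 - ‖x.2‖ ^ 2)) :
    LeftInvOn (projectiveMap T.symm) (projectiveMap T) (ball 0 1) := by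
  intro z hz
  have hd := projectiveMap_denom_ne_zero hα hT hz
  have h : ((1 : ℂ), projectiveMap T z) = (T (1, z)).1⁻¹ • T (1, z) :=
    Prod.ext (inv_mul_cancel₀ hd).symm rfl
  rw [projectiveMap, h, map_smul, T.symm_apply_apply]
  simp [smul_smul, hd]

/-- A linear automorphism of `ℂ × E` rescaling the Lorentzian form by a positive factor induces an
automorphism of the unit ball. -/
theorem biholo_projectiveMap [FiniteDimensional ℂ E] (hα : 0 < α)
    (hT : ∀ x, ‖(T x).1‖ ^ 2 - ‖(T x).2‖ ^ 2 = α * (‖x.1‖ ^ 2 - ‖x.2‖ ^ 2)) :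
    Biholo (projectiveMap T) (ball (0 : E) 1) (ball (0 : E) 1) := by
  have hα' : 0 < α⁻¹ := inv_pos.2 hα
  have hT' : ∀ x, ‖(T.symm x).1‖ ^ 2 - ‖(T.symm x).2‖ ^ 2 = α⁻¹ * (‖x.1‖ ^ 2 - ‖x.2‖ ^ 2) := by
    intro x
    have := hT (T.symm x)
    rw [T.apply_symm_apply] at this
    rw [this, inv_mul_cancel_left₀ hα.ne']
  exact ⟨differentiableOn_projectiveMap hα hT, mapsTo_projectiveMap hα hT, projectiveMap T.symm,
    differentiableOn_projectiveMap hα' hT', mapsTo_projectiveMap hα' hT',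
    leftInvOn_projectiveMap hα hT, leftInvOn_projectiveMap (T := T.symm) hα' hT'⟩

end ProjectiveMap

section QuadraticMap

variable {E : Type*} [NormedAddCommGroup E] [InnerProductSpace ℂ E]

/-- A symmetric bilinear map sending every `(v, v)` to a multiple of `v` does so linearly. -/
theorem exists_linear_of_diag_mem_span {B : E →L[ℂ] E →L[ℂ] E} (hB : ∀ u v, B u v = B v u)
    (h : ∀ v, ∃ c : ℂ, B v v = c • v) : ∃ l : E →ₗ[ℂ] ℂ, ∀ v, B v v = l v • v := by
  have h' : ∀ v, ∃ c : ℂ, B v v = c • v ∧ (v = 0 → c = 0) := by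
    intro v
    by_cases hv : v = 0
    · exact ⟨0, by simp [hv], fun _ => rfl⟩
    · obtain ⟨c, hc⟩ := h v
      exact ⟨c, hc, fun h => absurd h hv⟩
  choose l hl hl0 using h'
  have hsmul : ∀ (a : ℂ) v, l (a • v) = a * l v := by
    intro a v
    by_cases hav : a • v = 0
    · rw [hl0 _ hav]
      rcases smul_eq_zero.1 hav with h | h
      · rw [h, zero_mul]
      · rw [hl0 v h, mul_zero]
    · have h1 := hl (a • v)
      rw [map_smul, map_smul, smul_apply, hl v] at h1
      have h2 : (l (a • v) - a * l v) • (a • v) = 0 := by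
        rw [sub_smul, ← h1]
        module
      exact sub_eq_zero.1 ((smul_eq_zero.1 h2).resolve_right hav)
  have hadd : ∀ u v, l (u + v) = l u + l v := by
    intro u v
    by_cases hv : v = 0
    · rw [hv, add_zero, hl0 0 rfl, add_zero]
    by_cases huv : ∃ a : ℂ, a • v = u
    · obtain ⟨a, rfl⟩ := huv
      have : a • v + v = (a + 1) • v := by rw [add_smul, one_smul]
      rw [this, hsmul, hsmul]
      ring
    · have hind : ∀ s t : ℂ, s • u + t • v = 0 → s = 0 ∧ t = 0 := by
        intro s t hst
        have hs : s = 0 := by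
          by_contra hs
          refine huv ⟨-(s⁻¹ * t), ?_⟩
          have := congrArg (fun x => s⁻¹ • x) hst
          simp only [smul_add, smul_smul, inv_mul_cancel₀ hs, one_smul, smul_zero] at this
          rw [neg_smul]
          exact (eq_neg_of_add_eq_zero_left this).symm
        rw [hs, zero_smul, zero_add] at hst
        exact ⟨hs, (smul_eq_zero.1 hst).resolve_right hv⟩
      have hs := hl (u + v)
      have hd := hl (u - v)
      simp only [map_add, map_sub, add_apply, sub_apply,
        hl u, hl v, hB v u] at hs hd
      have key : (2 * l u - l (u + v) - l (u - v)) • u + (2 * l v - l (u + v) + l (u - v)) • v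
          = 0 := by
        linear_combination (norm := module) hs + hd
      obtain ⟨h1, h2⟩ := hind _ _ key
      linear_combination (-1 / 2 : ℂ) * h1 + (-1 / 2 : ℂ) * h2
  exact ⟨{ toFun := l, map_add' := hadd, map_smul' := hsmul }, hl⟩

theorem diag_mem_span_of_eventually {B : E →L[ℂ] E →L[ℂ] E} {v₀ : E}
    (h : ∀ᶠ v in 𝓝 v₀, ∃ c : ℂ, B v v = c • v) (v : E) : ∃ c : ℂ, B v v = c • v := by
  have hQ : Differentiable ℂ fun v => B v v := B.differentiable.clm_apply differentiable_id
  have hlin : ∀ x : E, Differentiable ℂ fun v : E => inner ℂ x v := fun x =>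
    (innerSL ℂ x).differentiable
  have key : ∀ x y, inner ℂ x v * inner ℂ y (B v v) - inner ℂ y v * inner ℂ x (B v v) = 0 := by
    intro x y
    refine eqOn_zero_of_convex
      (f := fun v => inner ℂ x v * inner ℂ y (B v v) - inner ℂ y v * inner ℂ x (B v v))
      isOpen_univ convex_univ ?_ (mem_univ v₀) ?_ (mem_univ v)
    · exact (((hlin x).mul ((hlin y).comp hQ)).sub
        ((hlin y).mul ((hlin x).comp hQ))).differentiableOn
    · filter_upwards [h] with u ⟨c, hc⟩
      simp only [hc, inner_smul_right, Pi.zero_apply]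
      ring
  by_cases hv : v = 0
  · exact ⟨0, by simp [hv]⟩
  · have hvv : inner ℂ v v ≠ (0 : ℂ) := by simpa using hv
    refine ⟨inner ℂ v (B v v) / inner ℂ v v, ext_inner_left ℂ fun y => ?_⟩
    rw [inner_smul_right, div_mul_eq_mul_div, eq_div_iff hvv]
    linear_combination key v y

end QuadraticMap

section Hyperplane

open ComplexConjugate

variable {E : Type*} [NormedAddCommGroup E] [InnerProductSpace ℂ E]

/-- Directions lying in polar hyperplanes through `p` contain a nonempty open cone. -/
theorem exists_eventually_polar (hdim : 2 ≤ Module.finrank ℂ E) {p : E} (hp : ‖p‖ = 1) {ε : ℝ}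
    (hε : 0 < ε) : ∃ v₀ : E, v₀ ≠ 0 ∧ ‖v₀‖ < ε ∧
      ∀ᶠ v in 𝓝 v₀, ∃ w ∈ ball p ε, inner ℂ p w = 1 ∧ inner ℂ w v = 0 := by
  obtain ⟨v, hv0, hpv⟩ := exists_ne_zero_inner_eq_zero hdim p
  obtain ⟨t, ht, ht0⟩ := (((tendsto_line 0 v).eventually (ball_mem_nhds 0 hε)).filter_mono
      nhdsWithin_le_nhds |>.and (self_mem_nhdsWithin (a := (0 : ℂ)) (s := {0}ᶜ))).exists
  rw [zero_add, dist_zero_right] at ht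
  have hv₀ : t • v ≠ 0 := smul_ne_zero ht0 hv0
  have hpv₀ : inner ℂ p (t • v) = 0 := by rw [inner_smul_right, hpv, mul_zero]
  generalize t • v = v₀ at ht hv₀ hpv₀
  have hne : inner ℂ v₀ v₀ ≠ (0 : ℂ) := by simpa using hv₀
  refine ⟨v₀, hv₀, ht, ?_⟩
  have hcont : ContinuousAt (fun u : E => p - conj (inner ℂ p u / inner ℂ v₀ u) • v₀) v₀ := by
    have h1 : ContinuousAt (fun u : E => inner ℂ p u / inner ℂ v₀ u) v₀ :=
      ContinuousAt.div (by fun_prop) (by fun_prop) hne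
    exact continuousAt_const.sub
      ((Complex.continuous_conj.continuousAt.comp h1).smul continuousAt_const)
  have hmem : ∀ᶠ u in 𝓝 v₀, p - conj (inner ℂ p u / inner ℂ v₀ u) • v₀ ∈ ball p ε :=
    hcont.eventually (isOpen_ball.mem_nhds (by simpa [hpv₀] using hε))
  have hne' : ∀ᶠ u in 𝓝 v₀, inner ℂ v₀ u ≠ (0 : ℂ) :=
    (by fun_prop : ContinuousAt (fun u : E => inner ℂ v₀ u) v₀).eventually_ne hne
  filter_upwards [hmem, hne'] with u hu hu0
  refine ⟨_, hu, ?_, ?_⟩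
  · rw [inner_sub_right, inner_smul_right, hpv₀, inner_self_eq_one hp]
    simp
  · rw [inner_sub_left, inner_smul_left, Complex.conj_conj, div_mul_cancel₀ _ hu0, sub_self]

variable [FiniteDimensional ℂ E]

/-- On a polar hyperplane, a map preserving the quadric is projective linear. -/
theorem PreservesQuadric.exists_line_formula {F : E → E} {B : Set E} (hB : IsOpen B)
    (hF : DifferentiableOn ℂ F B) (hQ : PreservesQuadric F B) {p w v : E} (hp : p ∈ B)
    (hw : w ∈ B) (hpw : inner ℂ p w = 1) (hv : inner ℂ w v = 0) (e : E ≃L[ℂ] E)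
    (he : (e : E →L[ℂ] E) = fderiv ℂ F w) :
    ∃ c : ℂ, ∀ t : ℂ, p + t • v ∈ B →
      (1 + t * c) • (F (p + t • v) - F p) = t • fderiv ℂ F p v := by
  have hwp := inner_eq_one_symm hpw
  set b := e.symm (F w) with hb
  have hfd : ∀ u, fderiv ℂ F w u = e u := fun u => by rw [← he]; rfl
  have hmain : ∀ t : ℂ, p + t • v ∈ B → ∀ u,
      inner ℂ (F (p + t • v)) (e u) * inner ℂ (p + t • v) b = inner ℂ (p + t • v) u := by
    intro t ht u
    have hwz : inner ℂ w (p + t • v) = 1 := inner_line_eq_one hwp hv t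
    have h1 := hQ.inner_fderiv hB hF hw ht hwz u
    have h2 := hQ.inner_fderiv hB hF hw ht hwz b
    rw [hfd, e.apply_symm_apply, hQ _ hw _ ht hwz] at h2
    rw [hfd] at h1
    rw [h1]
    linear_combination -inner ℂ (p + t • v) u * h2
  have hp0 : p + (0 : ℂ) • v = p := by simp
  have hpb : inner ℂ p b ≠ 0 := by
    intro h
    have h1 := hmain 0 (hp0.symm ▸ hp) w
    rw [hp0, h, mul_zero, hpw] at h1
    exact zero_ne_one h1
  set c : ℂ := conj (inner ℂ v b / inner ℂ p b) with hc
  set y : E := conj (inner ℂ p b)⁻¹ • ContinuousLinearMap.adjoint (e.symm : E →L[ℂ] E) v with hy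
  have hX : ∀ t : ℂ, p + t • v ∈ B → (1 + t * c) • F (p + t • v) - F p = t • y := by
    intro t ht
    refine ext_inner_right ℂ fun x => ?_
    obtain ⟨u, rfl⟩ := e.surjective x
    have h1 := hmain t ht u
    have h2 := hmain 0 (hp0.symm ▸ hp) u
    rw [hp0] at h2
    rw [inner_add_left, inner_add_left, inner_smul_left, inner_smul_left] at h1
    rw [inner_sub_left, inner_smul_left, inner_smul_left, hy, inner_smul_left,
      ContinuousLinearMap.adjoint_inner_left, ContinuousLinearEquiv.coe_coe, e.symm_apply_apply,
      hc]
    simp only [map_add, map_mul, map_one, Complex.conj_conj]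
    field_simp
    linear_combination h1 - h2
  have hFp := (hF p hp).differentiableAt (hB.mem_nhds hp)
  have hderiv : c • F p + fderiv ℂ F p v = y := by
    have h1 : HasDerivAt (fun t : ℂ => (1 + t * c) • F (p + t • v) - F p)
        (fderiv ℂ F p v + c • F p) 0 := by
      have h2 : HasDerivAt (fun t : ℂ => 1 + t * c) c 0 := by
        simpa using ((hasDerivAt_id (0 : ℂ)).mul_const c).const_add 1
      simpa using (h2.smul (hasDerivAt_comp_line hFp v)).sub_const (F p)
    have h3 : HasDerivAt (fun t : ℂ => t • y) y 0 := by
      simpa using (hasDerivAt_id (0 : ℂ)).smul_const y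
    rw [add_comm]
    refine h1.unique (h3.congr_of_eventuallyEq ?_)
    filter_upwards [(tendsto_line p v).eventually (hB.mem_nhds hp)] with t ht using hX t ht
  refine ⟨c, fun t ht => ?_⟩
  have h1 := hX t ht
  rw [← hderiv] at h1
  linear_combination (norm := module) h1

theorem fderiv_fderiv_of_line_formula {F : E → E} {B : Set E} (hB : IsOpen B)
    (hF : DifferentiableOn ℂ F B) {p v : E} (hp : p ∈ B) {c : ℂ}
    (h : ∀ t : ℂ, p + t • v ∈ B →
      (1 + t * c) • (F (p + t • v) - F p) = t • fderiv ℂ F p v) :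
    fderiv ℂ (fderiv ℂ F) p v v = (-2 * c) • fderiv ℂ F p v := by
  have hat : ∀ z ∈ B, DifferentiableAt ℂ F z := fun z hz =>
    (hF z hz).differentiableAt (hB.mem_nhds hz)
  have hlin : ∀ t : ℂ, HasDerivAt (fun t : ℂ => 1 + t * c) c t := fun t => by
    simpa using ((hasDerivAt_id t).mul_const c).const_add 1
  have hev := (tendsto_line p v).eventually (hB.mem_nhds hp)
  have hfirst : ∀ᶠ t : ℂ in 𝓝 0, (1 + t * c) • fderiv ℂ F (p + t • v) v
      + c • (F (p + t • v) - F p) = fderiv ℂ F p v := by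
    filter_upwards [hev.eventually_nhds] with t ht
    have h1 : HasDerivAt (fun t : ℂ => F (p + t • v)) (fderiv ℂ F (p + t • v) v) t :=
      (hat _ ht.self_of_nhds).hasFDerivAt.comp_hasDerivAt t (hasDerivAt_line p v t)
    have h3 : HasDerivAt (fun t : ℂ => t • fderiv ℂ F p v) (fderiv ℂ F p v) t := by
      simpa using (hasDerivAt_id t).smul_const (fderiv ℂ F p v)
    exact ((hlin t).smul (h1.sub_const (F p))).unique
      (h3.congr_of_eventuallyEq (ht.mono fun s hs => h s hs))
  have hd : HasDerivAt (fun t : ℂ => fderiv ℂ F (p + t • v) v) (fderiv ℂ (fderiv ℂ F) p v v) 0 := by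
    have h1 : HasFDerivAt (fderiv ℂ F) (fderiv ℂ (fderiv ℂ F) p) (p + (0 : ℂ) • v) := by
      simpa using ((differentiableOn_fderiv hB hF p hp).differentiableAt
        (hB.mem_nhds hp)).hasFDerivAt
    exact (ContinuousLinearMap.apply ℂ E v).hasFDerivAt.comp_hasDerivAt (0 : ℂ)
      (h1.comp_hasDerivAt (0 : ℂ) (hasDerivAt_line p v 0))
  have h1 := ((hlin 0).smul hd).add
    (((hasDerivAt_comp_line (hat p hp) v).sub_const (F p)).const_smul c)
  have h2 := h1.unique ((hasDerivAt_const (0 : ℂ) (fderiv ℂ F p v)).congr_of_eventuallyEq hfirst)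
  simp only [zero_mul, add_zero, one_smul, zero_smul] at h2
  linear_combination (norm := module) h2

/-- Near a nondegenerate point of the sphere, a map preserving the quadric is projective linear. -/
theorem PreservesQuadric.exists_projective_formula (hdim : 2 ≤ Module.finrank ℂ E) {F : E → E}
    {p : E} (hp : ‖p‖ = 1) {ε : ℝ} (hε : 0 < ε) (hF : DifferentiableOn ℂ F (ball p ε))
    (hQ : PreservesQuadric F (ball p ε)) (e : E → E ≃L[ℂ] E)
    (he : ∀ w ∈ ball p ε, (e w : E →L[ℂ] E) = fderiv ℂ F w) :
    ∃ β : E →ₗ[ℂ] ℂ, ∀ v, ‖v‖ < ε → (1 + β v) • (F (p + v) - F p) = fderiv ℂ F p v := by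
  have hpB : p ∈ ball p ε := mem_ball_self hε
  obtain ⟨v₀, hv₀, hv₀ε, hpolar⟩ := exists_eventually_polar hdim hp hε
  have hep : ∀ u, fderiv ℂ F p u = e p u := fun u => by rw [← he p hpB]; rfl
  have hline : ∀ᶠ v in 𝓝 v₀, ∃ c : ℂ, fderiv ℂ (fderiv ℂ F) p v v = (-2 * c) • fderiv ℂ F p v ∧
      ∀ t : ℂ, p + t • v ∈ ball p ε →
        (1 + t * c) • (F (p + t • v) - F p) = t • fderiv ℂ F p v := by
    filter_upwards [hpolar] with v ⟨w, hw, hpw, hwv⟩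
    obtain ⟨c, hc⟩ := hQ.exists_line_formula isOpen_ball hF hpB hw hpw hwv (e w) (he w hw)
    exact ⟨c, fderiv_fderiv_of_line_formula isOpen_ball hF hpB hc, hc⟩
  let B : E →L[ℂ] E →L[ℂ] E := (ContinuousLinearMap.compL ℂ E E E ((e p).symm : E →L[ℂ] E)).comp
    (fderiv ℂ (fderiv ℂ F) p)
  have hB : ∀ u v, B u v = (e p).symm (fderiv ℂ (fderiv ℂ F) p u v) := fun u v => rfl
  have hat : ∀ z ∈ ball p ε, DifferentiableAt ℂ F z := fun z hz =>
    (hF z hz).differentiableAt (isOpen_ball.mem_nhds hz)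
  have hsymm : ∀ u v, B u v = B v u := by
    intro u v
    rw [hB, hB, second_derivative_symmetric_of_eventually (f := F) (f' := fderiv ℂ F) (x := p)
      (by filter_upwards [ball_mem_nhds p hε] with z hz using (hat z hz).hasFDerivAt)
      ((differentiableOn_fderiv isOpen_ball hF p hpB).differentiableAt
        (isOpen_ball.mem_nhds hpB)).hasFDerivAt u v]
  have hdiag : ∀ v, ∃ c : ℂ, B v v = c • v := diag_mem_span_of_eventually (v₀ := v₀) <| by
    filter_upwards [hline] with v ⟨c, hc, _⟩
    exact ⟨-2 * c, by rw [hB, hc, map_smul, hep, (e p).symm_apply_apply]⟩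
  obtain ⟨l, hl⟩ := exists_linear_of_diag_mem_span hsymm hdiag
  refine ⟨(-1 / 2 : ℂ) • l, fun v hv => ?_⟩
  have hβ : Differentiable ℂ ((-1 / 2 : ℂ) • l : E →ₗ[ℂ] ℂ) :=
    (LinearMap.toContinuousLinearMap ((-1 / 2 : ℂ) • l)).differentiable
  have hsh : DifferentiableOn ℂ (fun v => F (p + v)) (ball 0 ε) :=
    hF.comp (differentiable_id.const_add p).differentiableOn fun v hv => by simpa using hv
  have hzero := eqOn_zero_of_convex
    (f := fun v => (1 + ((-1 / 2 : ℂ) • l) v) • (F (p + v) - F p) - fderiv ℂ F p v)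
    isOpen_ball (convex_ball (0 : E) ε)
    ((((hβ.const_add 1).differentiableOn.smul (hsh.sub_const (F p))).sub
      (fderiv ℂ F p).differentiable.differentiableOn))
    (mem_ball_zero_iff.2 hv₀ε) (by
      filter_upwards [hline, isOpen_ball.mem_nhds (mem_ball_zero_iff.2 hv₀ε),
        isOpen_ne.mem_nhds hv₀] with u ⟨c, hc, hcl⟩ hu hu0
      have h1 : l u = -2 * c := by
        have h2 := hl u
        rw [hB, hc, map_smul, hep, (e p).symm_apply_apply] at h2
        exact (smul_left_injective ℂ hu0 h2).symm
      have h3 := hcl 1 (by simpa using hu)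
      have h4 : 1 + ((-1 / 2 : ℂ) • l) u = 1 + c := by
        rw [LinearMap.smul_apply, h1, smul_eq_mul]
        ring
      simp only [one_mul, one_smul] at h3
      simp only [h4, h3, sub_self, Pi.zero_apply])
    (mem_ball_zero_iff.2 hv)
  exact sub_eq_zero.1 hzero

end Hyperplane

section Main

open ComplexConjugate

variable {E : Type*} [NormedAddCommGroup E] [InnerProductSpace ℂ E]

theorem eq_zero_of_eventually_affine_eq_zero {a b : ℂ} (h : ∀ᶠ s : ℂ in 𝓝[≠] 0, a + s * b = 0) :
    a = 0 ∧ b = 0 := by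
  have hlim : Tendsto (fun s : ℂ => a + s * b) (𝓝[≠] 0) (𝓝 a) :=
    ((by fun_prop : Continuous fun s : ℂ => a + s * b).tendsto' 0 a (by simp)).mono_left
      nhdsWithin_le_nhds
  have ha : a = 0 := tendsto_nhds_unique hlim (tendsto_const_nhds.congr' (h.mono fun s hs => hs.symm))
  obtain ⟨s, hs, hs0⟩ := (h.and self_mem_nhdsWithin).exists
  rw [ha, zero_add] at hs
  exact ⟨ha, (mul_eq_zero.1 hs).resolve_left hs0⟩

/-- The Levi form identity at a point where a map preserving the quadric is projective linear. -/
theorem PreservesQuadric.form_identity {F : E → E} {p : E} (hp : ‖p‖ = 1) {ε : ℝ} (hε : 0 < ε)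
    (hQ : PreservesQuadric F (ball p ε)) {A : E →ₗ[ℂ] E} {β : E →ₗ[ℂ] ℂ} {ρ : ℂ}
    (hA : ∀ v, ‖v‖ < ε → (1 + β v) • (F (p + v) - F p) = A v)
    (hρ : ∀ v, inner ℂ (F p) (A v) = ρ * inner ℂ p v) :
    conj ρ = ρ ∧ ∀ v, conj (β v) * (ρ * inner ℂ p v) + β v * (ρ * inner ℂ v p)
      + inner ℂ (A v) (A v) = ρ * inner ℂ v v := by
  have hpp := inner_self_eq_one hp
  have hpB : p ∈ ball p ε := mem_ball_self hε
  have hqq : inner ℂ (F p) (F p) = (1 : ℂ) := hQ p hpB p hpB hpp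
  have hρ' : ∀ v, inner ℂ (A v) (F p) = conj ρ * inner ℂ v p := fun v => by
    rw [← inner_conj_symm, hρ, map_mul, inner_conj_symm]
  have hpol : ∀ u v, ‖u‖ < ε → ‖v‖ < ε → inner ℂ p v + inner ℂ u p + inner ℂ u v = 0 →
      conj (1 + β u) * (ρ * inner ℂ p v) + (1 + β v) * (conj ρ * inner ℂ u p)
        + inner ℂ (A u) (A v) = 0 := by
    intro u v hu hv huv
    have h1 : inner ℂ (F (p + u)) (F (p + v)) = 1 := by
      refine hQ _ (by simpa using hv) _ (by simpa using hu) (inner_eq_one_symm ?_)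
      rw [inner_add_left, inner_add_right, inner_add_right, hpp]
      linear_combination huv
    have hF : ∀ v, ‖v‖ < ε → (1 + β v) • F (p + v) = (1 + β v) • F p + A v := by
      intro v hv
      rw [← hA v hv]
      module
    have h2 : inner ℂ ((1 + β u) • F (p + u)) ((1 + β v) • F (p + v))
        = conj (1 + β u) * (1 + β v) := by
      rw [inner_smul_left, inner_smul_right, h1, mul_one]
    rw [hF u hu, hF v hv, inner_add_left, inner_add_right, inner_add_right, inner_smul_left,
      inner_smul_left, inner_smul_right, inner_smul_right, hqq, hρ, hρ'] at h2
    linear_combination h2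
  have hgen : ∀ v, inner ℂ p v ≠ 0 → conj ρ = ρ ∧ conj (β v) * (ρ * inner ℂ p v)
      + β v * (conj ρ * inner ℂ v p) + inner ℂ (A v) (A v) = ρ * inner ℂ v v := by
    intro v hv
    set x := inner ℂ p v with hx
    have hvp : inner ℂ v p = conj x := (inner_conj_symm v p).symm
    have hx' : conj x ≠ 0 := by simpa using hv
    set n : ℂ := inner ℂ v v with hn
    have hcont : ContinuousAt (fun s : ℂ => -(s * x) / (conj x + s * n)) 0 :=
      ContinuousAt.div (by fun_prop) (by fun_prop) (by simpa using hv)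
    have hev : ∀ᶠ s : ℂ in 𝓝[≠] 0, (ρ - conj ρ) * conj x + s * (ρ * n -
        (conj (β v) * (ρ * x) + β v * (conj ρ * conj x) + inner ℂ (A v) (A v))) = 0 := by
      have h1 : ∀ᶠ s : ℂ in 𝓝 0, ‖s • v‖ < ε :=
        (by fun_prop : ContinuousAt (fun s : ℂ => ‖s • v‖) 0).eventually_lt_const (by simpa using hε)
      have h2 : ∀ᶠ s : ℂ in 𝓝 0, ‖conj (-(s * x) / (conj x + s * n)) • v‖ < ε := by
        have hc : ContinuousAt (fun s : ℂ => ‖conj (-(s * x) / (conj x + s * n)) • v‖) 0 :=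
          ((Complex.continuous_conj.continuousAt.comp hcont).smul continuousAt_const).norm
        exact hc.eventually_lt_const (by simpa using hε)
      have h3 : ∀ᶠ s : ℂ in 𝓝 0, conj x + s * n ≠ 0 :=
        (by fun_prop : ContinuousAt (fun s : ℂ => conj x + s * n) 0).eventually_ne
          (by simpa using hv)
      filter_upwards [nhdsWithin_le_nhds h1, nhdsWithin_le_nhds h2, nhdsWithin_le_nhds h3,
        self_mem_nhdsWithin] with s hs hr hd hs0
      set r := -(s * x) / (conj x + s * n) with hrdef
      have hrd : r * (conj x + s * n) = -(s * x) := div_mul_cancel₀ _ hd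
      have h4 := hpol (conj r • v) (s • v) hr hs (by
        rw [inner_smul_left, inner_smul_left, inner_smul_right, inner_smul_right, hvp, ← hx, ← hn,
          Complex.conj_conj]
        linear_combination hrd)
      simp only [map_smul, inner_smul_left, inner_smul_right, hvp, ← hx, smul_eq_mul, map_add,
        map_one, map_mul, Complex.conj_conj] at h4
      have hsx : s * x ≠ 0 := mul_ne_zero hs0 hv
      refine (mul_eq_zero.1 (?_ : (s * x) * _ = 0)).resolve_left hsx
      linear_combination (conj x + s * n) * h4 - (s * (conj (β v) * (ρ * x)
        + β v * (conj ρ * conj x) + inner ℂ (A v) (A v)) + conj ρ * conj x) * hrd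
    obtain ⟨h1, h2⟩ := eq_zero_of_eventually_affine_eq_zero hev
    refine ⟨(sub_eq_zero.1 ((mul_eq_zero.1 h1).resolve_right hx')).symm, ?_⟩
    rw [hvp]
    linear_combination -h2
  have hreal : conj ρ = ρ := (hgen p (by rw [hpp]; exact one_ne_zero)).1
  refine ⟨hreal, fun v => ?_⟩
  have hgen' := fun v hv => (hgen v hv).2
  rw [hreal] at hgen'
  by_cases hv : inner ℂ p v = 0
  · have h0 := hgen' p (by rw [hpp]; exact one_ne_zero)
    have h1 := hgen' (v + p) (by rw [inner_add_right, hv, hpp]; simp)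
    have h2 := hgen' (v - p) (by rw [inner_sub_right, hv, hpp]; simp)
    simp only [map_add, map_sub, inner_add_left, inner_add_right, inner_sub_left,
      inner_sub_right] at h1 h2
    linear_combination (1 / 2) * h1 + (1 / 2) * h2 - h0
  · exact hgen' v hv

variable [FiniteDimensional ℂ E]

/-- The linear automorphism of `ℂ × E` inducing `p + v ↦ q + (1 + β v)⁻¹ • A v`. -/
def homogenization (p q : E) (A : E →ₗ[ℂ] E) (hA : Function.Injective A) (β : E →ₗ[ℂ] ℂ) :
    (ℂ × E) ≃ₗ[ℂ] (ℂ × E) :=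
  let y : (ℂ × E) →ₗ[ℂ] E := LinearMap.snd ℂ ℂ E - (LinearMap.fst ℂ ℂ E).smulRight p
  let d : (ℂ × E) →ₗ[ℂ] ℂ := LinearMap.fst ℂ ℂ E + β.comp y
  LinearEquiv.ofInjectiveEndo (d.prod (d.smulRight q + A.comp y)) <| by
    refine (injective_iff_map_eq_zero _).2 fun x hx => ?_
    have h1 : d x = 0 := congrArg Prod.fst hx
    have h2 : d x • q + A (y x) = 0 := congrArg Prod.snd hx
    rw [h1, zero_smul, zero_add] at h2
    have h3 : y x = 0 := hA (by rw [h2, map_zero])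
    have h4 : x.1 + β (y x) = 0 := h1
    rw [h3, map_zero, add_zero] at h4
    have h5 : x.2 - x.1 • p = 0 := h3
    rw [h4, zero_smul, sub_zero] at h5
    exact Prod.ext h4 h5

theorem homogenization_apply (p q : E) (A : E →ₗ[ℂ] E) (hA : Function.Injective A)
    (β : E →ₗ[ℂ] ℂ) (x : ℂ × E) : homogenization p q A hA β x = (x.1 + β (x.2 - x.1 • p),
      (x.1 + β (x.2 - x.1 • p)) • q + A (x.2 - x.1 • p)) := rfl

/-- A map preserving the quadric near a nondegenerate point of the sphere agrees near that point
with an automorphism of the ball. -/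
theorem PreservesQuadric.exists_biholo (hdim : 2 ≤ Module.finrank ℂ E) {F : E → E}
    {p : E} (hp : ‖p‖ = 1) {ε : ℝ} (hε : 0 < ε) (hF : DifferentiableOn ℂ F (ball p ε))
    (hQ : PreservesQuadric F (ball p ε)) (e : E → E ≃L[ℂ] E)
    (he : ∀ w ∈ ball p ε, (e w : E →L[ℂ] E) = fderiv ℂ F w) :
    ∃ G : E → E, Biholo G (ball 0 1) (ball 0 1) ∧ EqOn F G (ball p ε ∩ ball 0 1) := by
  have hpp := inner_self_eq_one hp
  have hpB : p ∈ ball p ε := mem_ball_self hε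
  have hqq : inner ℂ (F p) (F p) = (1 : ℂ) := hQ p hpB p hpB hpp
  obtain ⟨β, hβ⟩ := hQ.exists_projective_formula hdim hp hε hF e he
  set A : E →ₗ[ℂ] E := (fderiv ℂ F p).toLinearMap with hAdef
  have hA : Function.Injective A := by
    have : (A : E → E) = e p := by rw [hAdef, ← he p hpB]; rfl
    rw [this]
    exact (e p).injective
  set ρ : ℂ := inner ℂ (F p) (fderiv ℂ F p p) with hρdef
  have hρ : ∀ v, inner ℂ (F p) (A v) = ρ * inner ℂ p v := fun v => by
    rw [mul_comm]
    exact hQ.inner_fderiv isOpen_ball hF hpB hpB hpp v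
  obtain ⟨hreal, hform⟩ := hQ.form_identity hp hε (A := A) hβ hρ
  have hρ' : ∀ v, inner ℂ (A v) (F p) = ρ * inner ℂ v p := fun v => by
    rw [← inner_conj_symm, hρ, map_mul, hreal, inner_conj_symm]
  obtain ⟨α, hα⟩ := Complex.conj_eq_iff_real.1 hreal
  have hsq : ∀ u : E, ((‖u‖ ^ 2 : ℝ) : ℂ) = inner ℂ u u := fun u => by
    rw [inner_self_eq_norm_sq_to_K]; norm_cast
  have hαpos : 0 < α := by
    obtain ⟨v, hv0, hpv⟩ := exists_ne_zero_inner_eq_zero hdim p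
    have hvp : inner ℂ v p = 0 := inner_eq_zero_symm.1 hpv
    have h1 := hform v
    rw [hpv, hvp, hα, ← hsq, ← hsq] at h1
    simp only [mul_zero, zero_add] at h1
    have h2 : ‖A v‖ ^ 2 = α * ‖v‖ ^ 2 := by exact_mod_cast h1
    have h3 : 0 < ‖A v‖ := norm_pos_iff.2 fun h => hv0 (hA (by rw [h, map_zero]))
    have h4 : 0 < α * ‖v‖ ^ 2 := h2 ▸ pow_pos h3 2
    exact pos_of_mul_pos_left h4 (sq_nonneg _)
  set T := homogenization p (F p) A hA β with hTdef
  have hT : ∀ x, ‖(T x).1‖ ^ 2 - ‖(T x).2‖ ^ 2 = α * (‖x.1‖ ^ 2 - ‖x.2‖ ^ 2) := by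
    rintro ⟨t, z⟩
    obtain ⟨y, rfl⟩ : ∃ y, z = t • p + y := ⟨z - t • p, by simp⟩
    have hsq' : ∀ s : ℂ, ((‖s‖ ^ 2 : ℝ) : ℂ) = conj s * s := fun s => by
      rw [Complex.conj_mul']; norm_cast
    rw [← Complex.ofReal_inj, Complex.ofReal_mul, Complex.ofReal_sub, Complex.ofReal_sub, hsq,
      hsq, hsq', hsq', hTdef, homogenization_apply, ← hα]
    simp only [add_sub_cancel_left, inner_add_left, inner_add_right, inner_smul_left,
      inner_smul_right, hqq, hpp, hρ, hρ', map_add]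
    linear_combination -hform y
  refine ⟨projectiveMap T, biholo_projectiveMap hαpos hT, ?_⟩
  rintro z ⟨hzp, hz⟩
  have hd := projectiveMap_denom_ne_zero hαpos hT hz
  have h1 := hβ (z - p) (by rwa [← dist_eq_norm])
  rw [add_sub_cancel] at h1
  have h2 : (T (1, z)).2 = (T (1, z)).1 • F z := by
    rw [hTdef, homogenization_apply]
    simp only [one_smul]
    change _ + fderiv ℂ F p (z - p) = _
    rw [← h1]
    module
  rw [projectiveMap, h2, inv_smul_smul₀ hd]

/-- A nonconstant holomorphic map sending a piece of the sphere into the sphere agrees near some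
point of the sphere with an automorphism of the ball. -/
theorem exists_biholo_of_mapsTo_sphere (hdim : 2 ≤ Module.finrank ℂ E) {U : Set E}
    (hU : IsOpen U) (hUc : IsPreconnected U) {p₀ : E} (hp₀ : p₀ ∈ U) (hp₀1 : ‖p₀‖ = 1) {F : E → E}
    (hF : DifferentiableOn ℂ F U) (hFnc : ¬ ∃ c, EqOn F (fun _ => c) U)
    (hS : ∀ z ∈ U, ‖z‖ = 1 → ‖F z‖ = 1) :
    ∃ G : E → E, Biholo G (ball 0 1) (ball 0 1) ∧
      ∃ p ∈ U, ‖p‖ = 1 ∧ ∀ᶠ z in 𝓝 p, z ∈ ball 0 1 → F z = G z := by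
  obtain ⟨p, hpU, hp1, hne⟩ : ∃ p ∈ U, ‖p‖ = 1 ∧ inner ℂ (F p) (fderiv ℂ F p p) ≠ 0 := by
    by_contra! h
    obtain ⟨r, hr, hrU⟩ := Metric.isOpen_iff.1 hU p₀ hp₀
    obtain ⟨c, hc⟩ := eventually_const_of_inner_fderiv_eq_zero hdim hp₀1 hr (hF.mono hrU)
      (fun z hz => hS z (hrU hz)) (fun z hz => h z (hrU hz))
    exact hFnc ⟨c, eqOn_const_of_preconnected hU hUc hF hp₀ hc⟩
  obtain ⟨r, hr, hrU⟩ := Metric.isOpen_iff.1 hU p hpU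
  obtain ⟨δ, hδ, hδr, hpol⟩ := exists_polarization_inner hp1 hr
  have hQδ : PreservesQuadric F (ball p δ) := hpol F F 1 (hF.mono hrU) (hF.mono hrU)
    fun z hz hz1 => inner_self_eq_one (hS z (hrU hz) hz1)
  have hδU : ball p δ ⊆ U := (ball_subset_ball hδr).trans hrU
  have hinj := hQδ.injective_fderiv isOpen_ball (hF.mono hδU) (mem_ball_self hδ) hp1 hne
  have hinv : ∀ᶠ w in 𝓝 p, ∃ e : E ≃L[ℂ] E, (e : E →L[ℂ] E) = fderiv ℂ F w := by
    have hcont : ContinuousAt (fderiv ℂ F) p :=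
      ((differentiableOn_fderiv hU hF).continuousOn).continuousAt (hU.mem_nhds hpU)
    refine hcont.eventually (ContinuousLinearEquiv.isOpen.mem_nhds ?_)
    exact ⟨(LinearEquiv.ofInjectiveEndo (fderiv ℂ F p).toLinearMap hinj).toContinuousLinearEquiv,
      by ext; rfl⟩
  obtain ⟨ε, hε, hball⟩ := Metric.eventually_nhds_iff_ball.1 (hinv.and (ball_mem_nhds p hδ))
  have hεδ : ball p ε ⊆ ball p δ := fun z hz => (hball z hz).2
  choose! e he using fun w hw => (hball w hw).1
  obtain ⟨G, hG, hFG⟩ := PreservesQuadric.exists_biholo hdim hp1 hε (hF.mono (hεδ.trans hδU))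
    (fun z hz w hw => hQδ z (hεδ hz) w (hεδ hw)) e he
  refine ⟨G, hG, p, hpU, hp1, ?_⟩
  filter_upwards [ball_mem_nhds p hε] with z hz hz1 using hFG ⟨hz, hz1⟩

end Main

/-- **Poincaré–Tanaka–Alexander theorem.** A nonconstant holomorphic map on a connected
open set `U` meeting the unit sphere of `ℂ^m` (`m ≥ 2`) which sends `U ∩ S` into `S`
coincides, on a nonempty open subset of `U ∩ 𝔹`, with an automorphism of the unit ball. -/
theorem poincare_tanaka_alexander (m : ℕ) (hm : 2 ≤ m)
    (U : Set (EuclideanSpace ℂ (Fin m))) (hUopen : IsOpen U) (hUconn : IsConnected U)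
    (hUS : (U ∩ sphere (0 : EuclideanSpace ℂ (Fin m)) 1).Nonempty)
    (F : EuclideanSpace ℂ (Fin m) → EuclideanSpace ℂ (Fin m))
    (hF : DifferentiableOn ℂ F U)
    (hFnc : ¬ ∃ c, Set.EqOn F (fun _ => c) U)
    (hFS : Set.MapsTo F (U ∩ sphere (0 : EuclideanSpace ℂ (Fin m)) 1)
      (sphere (0 : EuclideanSpace ℂ (Fin m)) 1)) :
    ∃ G : EuclideanSpace ℂ (Fin m) → EuclideanSpace ℂ (Fin m),
      Biholo G (ball (0 : EuclideanSpace ℂ (Fin m)) 1) (ball (0 : EuclideanSpace ℂ (Fin m)) 1) ∧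
      ∃ V : Set (EuclideanSpace ℂ (Fin m)), IsOpen V ∧ V.Nonempty ∧
        V ⊆ U ∩ ball (0 : EuclideanSpace ℂ (Fin m)) 1 ∧ Set.EqOn F G V := by
  obtain ⟨p₀, hp₀U, hp₀⟩ := hUS
  obtain ⟨G, hG, p, hpU, hp1, hev⟩ := exists_biholo_of_mapsTo_sphere
    (by rwa [finrank_euclideanSpace_fin]) hUopen hUconn.isPreconnected hp₀U
    (mem_sphere_zero_iff_norm.1 hp₀) hF hFnc
    fun z hz hz1 => mem_sphere_zero_iff_norm.1 (hFS ⟨hz, mem_sphere_zero_iff_norm.2 hz1⟩)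
  obtain ⟨ε, hε, hball⟩ := Metric.eventually_nhds_iff_ball.1 (hev.and (hUopen.mem_nhds hpU))
  refine ⟨G, hG, ball p ε ∩ ball 0 1, isOpen_ball.inter isOpen_ball, ?_,
    fun z hz => ⟨(hball z hz.1).2, hz.2⟩, fun z hz => (hball z hz.1).1 hz.2⟩
  have hcl : p ∈ closure (ball (0 : EuclideanSpace ℂ (Fin m)) 1) := by
    rw [closure_ball _ one_ne_zero]
    exact mem_closedBall_zero_iff.2 hp1.le
  exact mem_closure_iff.1 hcl _ isOpen_ball (mem_ball_self hε)
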